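/- (Real Nullstellensatz) For any ideal I in ℝ[X₁,...,Xₙ], the ideal of all polynomials vanishing on the real zero set Z(I) equals the real radical ʳ√I of I. -/

import Mathlib

/-- The zero set of an ideal of real polynomials. -/
def zeroSet (n : ℕ) (I : Ideal (MvPolynomial (Fin n) ℝ)) : Set (Fin n → ℝ) :=
  {x | ∀ g ∈ I, MvPolynomial.eval x g = 0}

/-- The real radical of an ideal. -/
def realRadical (n : ℕ) (I : Ideal (MvPolynomial (Fin n) ℝ)) : Set (MvPolynomial (Fin n) ℝ) :=
  {g | ∃ k : ℕ, 1 ≤ k ∧ ∃ (ℓ : ℕ) (gi : Fin ℓ → MvPolynomial (Fin n) ℝ),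
    g ^ (2 * k) + ∑ i, (gi i) ^ 2 ∈ I}


set_option linter.unusedSectionVars false

section RealAlgebra
open Polynomial


/-- The quadratic extension `L(i)`. -/
abbrev CC (L : Type*) [Field L] := QuadraticAlgebra L (-1) 0

instance CC.fact (L : Type*) [Field L] [LinearOrder L] [IsStrictOrderedRing L] :
    Fact (∀ r : L, r ^ 2 ≠ -1 + 0 * r) :=
  ⟨fun r h => by nlinarith [sq_nonneg r]⟩

section
variable {L : Type*} [Field L] [LinearOrder L] [IsStrictOrderedRing L] [IsRealClosed L]

theorem rc_sqrt {x : L} (hx : 0 ≤ x) : ∃ y, 0 ≤ y ∧ y ^ 2 = x := by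
  obtain ⟨r, hr⟩ := IsRealClosed.nonneg_iff_isSquare.1 hx
  exact ⟨|r|, abs_nonneg r, by rw [sq_abs, hr, sq]⟩

theorem CC.isSquare (z : CC L) : ∃ w : CC L, w ^ 2 = z := by
  obtain ⟨a, b⟩ := z
  obtain ⟨r, hr0, hr⟩ := rc_sqrt (L := L) (x := a ^ 2 + b ^ 2) (by positivity)
  have h1 : |a| ≤ r := abs_le_of_sq_le_sq (by nlinarith [sq_nonneg b]) hr0
  have h2 := abs_le.1 h1
  obtain ⟨u, hu0, hu⟩ := rc_sqrt (L := L) (x := (r + a) / 2) (by linarith)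
  obtain ⟨v, hv0, hv⟩ := rc_sqrt (L := L) (x := (r - a) / 2) (by linarith)
  have h3 : (2 * u * v) ^ 2 = b ^ 2 := by
    have : (2 * u * v) ^ 2 = 4 * u ^ 2 * v ^ 2 := by ring
    rw [this, hu, hv]; linear_combination hr
  have h4 : u ^ 2 - v ^ 2 = a := by rw [hu, hv]; ring
  rcases sq_eq_sq_iff_eq_or_eq_neg.1 h3 with h | h
  · refine ⟨⟨u, v⟩, ?_⟩
    rw [sq]
    ext
    · simp; linear_combination h4
    · simp; linear_combination h
  · refine ⟨⟨u, -v⟩, ?_⟩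
    rw [sq]
    ext
    · simp; linear_combination h4
    · simp; linear_combination -h

theorem CC.finrank_ne_two {K : Type*} [Field K] [Algebra (CC L) K] :
    Module.finrank (CC L) K ≠ 2 := by
  intro h
  have : FiniteDimensional (CC L) K := Module.finite_of_finrank_pos (by omega)
  have h1 : ∀ x : K, x ∈ (algebraMap (CC L) K).range := by
    intro x
    have hx : IsIntegral (CC L) x := Algebra.IsIntegral.isIntegral x
    have hd : (minpoly (CC L) x).natDegree ≤ 2 := h ▸ minpoly.natDegree_le x
    have hm := minpoly.monic hx
    have hp := minpoly.natDegree_pos hx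
    have he := minpoly.aeval (CC L) x
    have hc2 : (2 : CC L) ≠ 0 := two_ne_zero
    obtain h2 | h2 : (minpoly (CC L) x).natDegree = 1 ∨ (minpoly (CC L) x).natDegree = 2 := by omega
    · exact minpoly.natDegree_eq_one_iff.1 h2
    · set p := minpoly (CC L) x
      obtain ⟨w, hw⟩ := CC.isSquare ((p.coeff 1) ^ 2 - 4 * p.coeff 0)
      have hp2 : p.coeff 2 = 1 := by rw [← h2]; exact hm
      rw [aeval_eq_sum_range, h2] at he
      simp [Finset.sum_range_succ, hp2, Algebra.smul_def] at he
      have hw' := congrArg (algebraMap (CC L) K) hw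
      simp only [map_pow, map_sub, map_mul, map_ofNat] at hw'
      have hk2 : (2 : K) ≠ 0 := by
        have := (map_ne_zero (algebraMap (CC L) K)).2 hc2
        rwa [map_ofNat] at this
      have : (2 * x + algebraMap _ K (p.coeff 1)) ^ 2 = (algebraMap _ K w) ^ 2 := by
        rw [hw']; linear_combination 4 * he
      rcases sq_eq_sq_iff_eq_or_eq_neg.1 this with h | h
      · refine ⟨(w - p.coeff 1) / 2, ?_⟩
        simp only [map_div₀, map_sub, map_ofNat]
        field_simp; linear_combination -h
      · refine ⟨(-w - p.coeff 1) / 2, ?_⟩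
        simp only [map_div₀, map_sub, map_neg, map_ofNat]
        field_simp; linear_combination -h
  have h3 : (⊥ : Subalgebra (CC L) K) = ⊤ := by
    rw [eq_top_iff]; intro x _; exact Algebra.mem_bot.2 (h1 x)
  have := Subalgebra.bot_eq_top_iff_finrank_eq_one.1 h3
  omega

theorem rc_odd_finrank {K : Type*} [Field K] [Algebra L K] [FiniteDimensional L K]
    (h : Odd (Module.finrank L K)) : Module.finrank L K = 1 := by
  obtain ⟨α, hα⟩ := Field.exists_primitive_element L K
  have hi : IsIntegral L α := Algebra.IsIntegral.isIntegral α
  have h1 := IntermediateField.adjoin.finrank hi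
  rw [hα, IntermediateField.finrank_top'] at h1
  rw [h1] at h ⊢
  obtain ⟨x, hx⟩ := IsRealClosed.exists_isRoot_of_odd_natDegree h
  exact natDegree_eq_of_degree_eq_some (degree_eq_one_of_irreducible_of_root (minpoly.irreducible hi) hx)

theorem CC.finrank_galois {E : Type*} [Field E] [Algebra L E] [Algebra (CC L) E]
    [IsScalarTower L (CC L) E] [FiniteDimensional L E] [IsGalois L E] :
    Module.finrank (CC L) E = 1 := by
  have : FiniteDimensional (CC L) E := FiniteDimensional.right L (CC L) E
  have : IsGalois (CC L) E := IsGalois.tower_top_of_isGalois L (CC L) E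
  have : Fact (Nat.Prime 2) := ⟨Nat.prime_two⟩
  obtain ⟨P⟩ : Nonempty (Sylow 2 Gal(E/L)) := inferInstance
  have h1 : Module.finrank L (IntermediateField.fixedField (P : Subgroup Gal(E/L))) = 1 := by
    apply rc_odd_finrank
    have := P.not_dvd_index
    rw [IntermediateField.finrank_eq_fixingSubgroup_index, IntermediateField.fixingSubgroup_fixedField]
    exact Nat.not_even_iff_odd.1 (fun h => this h.two_dvd)
  have h2 : Module.finrank L E = Nat.card P := by
    rw [← Module.finrank_mul_finrank L (IntermediateField.fixedField (P : Subgroup Gal(E/L))) E, h1, one_mul]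
    exact IntermediateField.finrank_fixedField_eq_card _
  obtain ⟨k, hk⟩ := P.2.exists_card_eq
  have h3 : Module.finrank L (CC L) = 2 := QuadraticAlgebra.finrank_eq_two _ _
  have h4 := Module.finrank_mul_finrank L (CC L) E
  rw [h3, h2, show Nat.card P = 2 ^ k from hk] at h4
  rcases k with _ | _ | k
  · omega
  · omega
  · exfalso
    have h5 : Module.finrank (CC L) E = 2 ^ (k + 1) := by
      rw [pow_succ 2 (k+1)] at h4; omega
    have h6 := IsGalois.card_aut_eq_finrank (CC L) E
    obtain ⟨H, hH⟩ := Sylow.exists_subgroup_card_pow_prime (G := Gal(E/(CC L))) 2 (n := k)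
      (by rw [h6, h5]; exact pow_dvd_pow _ (by omega))
    have h7 := Module.finrank_mul_finrank (CC L) (IntermediateField.fixedField H) E
    rw [IntermediateField.finrank_fixedField_eq_card, hH, h5, pow_succ'] at h7
    exact CC.finrank_ne_two (Nat.eq_of_mul_eq_mul_right (by positivity) h7)

instance CC.isAlgClosed : IsAlgClosed (CC L) := by
  apply IsAlgClosed.of_exists_root
  intro p hm hp
  have := Fact.mk hp
  have : FiniteDimensional (CC L) (AdjoinRoot p) := (AdjoinRoot.powerBasis hp.ne_zero).finite
  have : FiniteDimensional L (AdjoinRoot p) := FiniteDimensional.trans L (CC L) _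
  let Ω := AlgebraicClosure (AdjoinRoot p)
  have : Algebra.IsAlgebraic L (AdjoinRoot p) := inferInstance
  have : Algebra.IsAlgebraic L Ω := Algebra.IsAlgebraic.trans L (AdjoinRoot p) Ω
  have : IsAlgClosure L Ω := ⟨inferInstance, inferInstance⟩
  let E := IntermediateField.normalClosure L (AdjoinRoot p) Ω
  letI : Algebra (CC L) E := ((algebraMap (AdjoinRoot p) E).comp (algebraMap (CC L) _)).toAlgebra
  haveI : IsScalarTower (CC L) (AdjoinRoot p) E := IsScalarTower.of_algebraMap_eq' rfl
  haveI : IsScalarTower L (CC L) E := by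
    apply IsScalarTower.of_algebraMap_eq
    intro x
    rw [IsScalarTower.algebraMap_apply L (AdjoinRoot p) E, IsScalarTower.algebraMap_apply L (CC L) (AdjoinRoot p)]
    rfl
  haveI : IsGalois L E := {}
  have h1 := CC.finrank_galois (L := L) (E := E)
  have h2 := Module.finrank_mul_finrank (CC L) (AdjoinRoot p) E
  rw [h1] at h2
  have h3 := Nat.eq_one_of_mul_eq_one_right h2
  rw [(AdjoinRoot.powerBasis hp.ne_zero).finrank, AdjoinRoot.powerBasis_dim] at h3
  obtain ⟨x, hx⟩ := exists_root_of_degree_eq_one (degree_eq_iff_natDegree_eq_of_pos one_pos |>.2 h3)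
  exact ⟨x, hx⟩
end


section
variable {L : Type*} [Field L] [LinearOrder L] [IsStrictOrderedRing L]

theorem exists_supported_ker {ι E : Type*} [Fintype ι] [Fintype E] (S : Finset ι) (T : Finset E)
    (φ : E → (ι → L) →ₗ[L] L) (h : T.card < S.card) :
    ∃ x : ι → L, x ≠ 0 ∧ (∀ i ∉ S, x i = 0) ∧ ∀ σ ∈ T, φ σ x = 0 := by
  classical
  let ext : (S → L) →ₗ[L] (ι → L) := LinearMap.pi fun i =>
    if hi : i ∈ S then LinearMap.proj ⟨i, hi⟩ else 0
  let Φ : (S → L) →ₗ[L] (T → L) := LinearMap.pi fun σ => (φ σ).comp ext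
  have hk : LinearMap.ker Φ ≠ ⊥ := LinearMap.ker_ne_bot_of_finrank_lt (by simpa using h)
  obtain ⟨y, hy, hy0⟩ := Submodule.exists_mem_ne_zero_of_ne_bot hk
  refine ⟨ext y, ?_, ?_, ?_⟩
  · intro h0
    apply hy0
    ext i
    have := congrFun h0 i
    simpa [ext] using this
  · intro i hi
    simp [ext, hi]
  · intro σ hσ
    exact congrFun (LinearMap.mem_ker.1 hy) ⟨σ, hσ⟩

theorem card_involution {E : Type*} [Fintype E] (c : E → E) (hc : ∀ σ, c (c σ) = σ) :
    ∃ T : Finset E, (∀ σ, σ ∈ T ∨ c σ ∈ T ∨ c σ = σ) ∧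
      ((∃ σ, c σ = σ) → 2 * T.card < Fintype.card E) ∧ 2 * T.card ≤ Fintype.card E := by
  classical
  let e := Fintype.equivFin E
  let T : Finset E := Finset.univ.filter fun σ => e σ < e (c σ)
  let T' : Finset E := Finset.univ.filter fun σ => e (c σ) < e σ
  have hcard : T'.card = T.card := by
    apply Finset.card_bij (fun σ _ => c σ)
    · intro σ h; simp [T, T', hc] at h ⊢; exact h
    · intro a _ b _ h; rw [← hc a, h, hc]
    · intro b h; refine ⟨c b, ?_, hc b⟩; simp [T, T', hc] at h ⊢; exact h
  have hd : Disjoint T T' := by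
    rw [Finset.disjoint_left]; intro σ h h'
    simp [T, T'] at h h'; exact lt_asymm h h'
  have hu : (T ∪ T').card = 2 * T.card := by
    rw [Finset.card_union_of_disjoint hd, hcard]; ring
  refine ⟨T, ?_, ?_, ?_⟩
  · intro σ
    rcases lt_trichotomy (e σ) (e (c σ)) with h | h | h
    · left; simpa [T] using h
    · right; right; exact (e.injective h).symm
    · right; left; simpa [T, hc] using h
  · rintro ⟨σ, hσ⟩
    rw [← hu]
    apply Finset.card_lt_univ_of_notMem (x := σ)
    simp [T, T', hσ]
  · rw [← hu]; exact Finset.card_le_univ _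

theorem signature_aux {ι E : Type*} [Fintype ι] [Fintype E] (hcard : Fintype.card E = Fintype.card ι)
    (c : E → E) (hc : ∀ σ, c (c σ) = σ)
    (re im : E → (ι → L) →ₗ[L] L) (hre : ∀ σ x, re (c σ) x = re σ x)
    (him : ∀ σ x, im (c σ) x = - im σ x) (a : ι → L) (ha : ∀ i, a i ≠ 0)
    (hQ : ∀ x : ι → L, ∑ i, a i * x i ^ 2 = ∑ σ, (re σ x ^ 2 - im σ x ^ 2)) :
    (∃ σ, c σ = σ) ↔ Fintype.card ι < 2 * (Finset.univ.filter fun i => 0 < a i).card := by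
  classical
  obtain ⟨T, hT, hT1, hT2⟩ := card_involution c hc
  set P := Finset.univ.filter fun i => 0 < a i
  have hP : Pᶜ.card = Fintype.card ι - P.card := Finset.card_compl P
  have hP' : P.card ≤ Fintype.card ι := Finset.card_le_univ _
  constructor
  · intro hfix
    have h1 := hT1 hfix
    by_contra hlt
    obtain ⟨x, hx0, hxS, hxT⟩ := exists_supported_ker Pᶜ T im (by omega)
    have him0 : ∀ σ, im σ x = 0 := by
      intro σ
      rcases hT σ with h | h | h
      · exact hxT σ h
      · have := hxT _ h; rw [him] at this; linarith
      · have := him σ x; rw [h] at this; linarith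
    have hpos : 0 ≤ ∑ i, a i * x i ^ 2 := by
      rw [hQ]; apply Finset.sum_nonneg; intro σ _; rw [him0]; nlinarith [sq_nonneg (re σ x)]
    have hneg : ∑ i, a i * x i ^ 2 < 0 := by
      obtain ⟨j, hj⟩ := Function.ne_iff.1 hx0
      apply Finset.sum_neg' 
      · intro i _
        by_cases hi : i ∈ Pᶜ
        · have : a i ≤ 0 := by simpa [P] using hi
          nlinarith [sq_nonneg (x i)]
        · simp [hxS i hi]
      · refine ⟨j, Finset.mem_univ _, ?_⟩
        have hi : j ∈ Pᶜ := by by_contra hi; exact hj (hxS j hi)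
        have : a j ≤ 0 := by simpa [P] using hi
        have h2 : a j < 0 := lt_of_le_of_ne this (ha j)
        have h3 : 0 < x j ^ 2 := by have : x j ≠ 0 := hj
                                    positivity
        nlinarith
    linarith
  · intro hlt
    by_contra hfix
    obtain ⟨x, hx0, hxS, hxT⟩ := exists_supported_ker P T re (by omega)
    have hre0 : ∀ σ, re σ x = 0 := by
      intro σ
      rcases hT σ with h | h | h
      · exact hxT σ h
      · have := hxT _ h; rwa [hre] at this
      · exact absurd ⟨σ, h⟩ hfix
    have hneg : ∑ i, a i * x i ^ 2 ≤ 0 := by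
      rw [hQ]; apply Finset.sum_nonpos; intro σ _; rw [hre0]; nlinarith [sq_nonneg (im σ x)]
    have hpos : 0 < ∑ i, a i * x i ^ 2 := by
      obtain ⟨j, hj⟩ := Function.ne_iff.1 hx0
      apply Finset.sum_pos' 
      · intro i _
        by_cases hi : i ∈ P
        · have : 0 < a i := by simpa [P] using hi
          positivity
        · simp [hxS i hi]
      · refine ⟨j, Finset.mem_univ _, ?_⟩
        have hi : j ∈ P := by by_contra hi; exact hj (hxS j hi)
        have : 0 < a j := by simpa [P] using hi
        have h3 : 0 < x j ^ 2 := by have : x j ≠ 0 := hj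
                                    positivity
        positivity
    linarith

variable [IsRealClosed L] {F : Type*} [Field F] [Algebra F L]

/-- conjugation -/
def CC.conj (F L : Type*) [Field F] [Field L] [LinearOrder L] [IsStrictOrderedRing L] [Algebra F L] :
    CC L →ₐ[F] CC L where
  toRingHom := starRingEnd (CC L)
  commutes' r := by
    rw [IsScalarTower.algebraMap_apply F L (CC L)]
    change star (algebraMap L (CC L) _) = _
    ext <;> simp

theorem signature_trace {K ι : Type*} [Field K] [Algebra F K] [FiniteDimensional F K] [CharZero F] [Fintype ι]
    (v : Module.Basis ι F K) (hv : (Algebra.traceForm F K).IsOrthoᵢ v) :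
    Nonempty (K →ₐ[F] L) ↔
     Fintype.card ι < 2 * (Finset.univ.filter fun i => 0 < algebraMap F L (Algebra.trace F K (v i * v i))).card := by
  classical
  let c : (K →ₐ[F] CC L) → (K →ₐ[F] CC L) := fun σ => (CC.conj F L).comp σ
  have hcσ : ∀ σ x, c σ x = star (σ x) := fun σ x => rfl
  have hcc : ∀ σ, c (c σ) = σ := by intro σ; ext x; simp [hcσ]; simp [hcσ]
  let ell : (K →ₐ[F] CC L) → (ι → L) →ₗ[L] CC L := fun σ =>
    ∑ i, (LinearMap.proj i).smulRight (σ (v i))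
  have hell : ∀ σ x, ell σ x = ∑ i, algebraMap L (CC L) (x i) * σ (v i) := by
    intro σ x; simp [ell, Algebra.smul_def]
  have hellc : ∀ σ x, ell (c σ) x = star (ell σ x) := by
    intro σ x; rw [hell, hell, star_sum]
    apply Finset.sum_congr rfl; intro i _
    rw [star_mul', hcσ]; congr 1
    ext <;> simp
  have key := signature_aux (L := L) (E := K →ₐ[F] CC L) (ι := ι) ?_ c hcc
    (fun σ => (QuadraticAlgebra.reₗ (-1) 0).comp (ell σ)) (fun σ => (QuadraticAlgebra.imₗ (-1) 0).comp (ell σ)) ?_ ?_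
    (fun i => algebraMap F L (Algebra.trace F K (v i * v i))) ?_ ?_
  · rw [← key]
    constructor
    · rintro ⟨σ⟩
      refine ⟨(IsScalarTower.toAlgHom F L (CC L)).comp σ, ?_⟩
      ext x <;> simp [hcσ]
    · rintro ⟨σ, hσ⟩
      have him : ∀ x, (σ x).im = 0 := by
        intro x
        have := congrArg QuadraticAlgebra.im (DFunLike.congr_fun hσ x)
        rw [hcσ] at this; simp at this; linarith
      refine ⟨{ toFun := fun x => (σ x).re, map_one' := ?_, map_mul' := ?_, map_zero' := ?_, map_add' := ?_, commutes' := ?_}⟩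
      · simp [QuadraticAlgebra.re_one]
      · intro x y; simp [him]
      · simp
      · intro x y; simp
      · intro r; simp [IsScalarTower.algebraMap_apply F L (CC L)]
  · rw [← Module.finrank_eq_card_basis v]
    exact AlgHom.card F K (CC L)
  · intro σ x; simp [hellc]
  · intro σ x; simp [hellc]
  · intro i
    rw [_root_.map_ne_zero]
    intro h0
    have hnd := traceForm_nondegenerate F K
    have h1 : ∀ y, Algebra.traceForm F K (v i) y = 0 := by
      intro y
      rw [← v.sum_repr y, map_sum]
      apply Finset.sum_eq_zero
      intro j _
      rw [map_smul]
      by_cases hij : i = j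
      · subst hij; rw [Algebra.traceForm_apply, h0, smul_zero]
      · have := hv hij
        simp [Function.onFun] at this
        simp [this]
    exact v.ne_zero i (hnd.1 _ h1)
  · intro x
    have h1 : algebraMap L (CC L) (∑ i, algebraMap F L (Algebra.trace F K (v i * v i)) * x i ^ 2) = ∑ σ, (ell σ x) ^ 2 := by
      have h2 : ∀ σ : K →ₐ[F] CC L, (ell σ x) ^ 2 = ∑ i, ∑ j, algebraMap L (CC L) (x i * x j) * σ (v i * v j) := by
        intro σ
        rw [hell, sq, Finset.sum_mul_sum]
        simp only [map_mul]
        apply Finset.sum_congr rfl; intro i _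
        apply Finset.sum_congr rfl; intro j _
        ring
      simp only [h2]
      rw [Finset.sum_comm, map_sum]
      apply Finset.sum_congr rfl; intro i _
      rw [Finset.sum_comm, Finset.sum_eq_single i]
      · rw [← Finset.mul_sum, ← trace_eq_sum_embeddings, IsScalarTower.algebraMap_apply F L (CC L)]
        simp only [map_mul, map_pow]; ring
      · intro j _ hij
        rw [← Finset.mul_sum, ← trace_eq_sum_embeddings]
        have := hv hij.symm
        simp [Function.onFun] at this
        simp [this]
      · simp
    have h3 := congrArg (QuadraticAlgebra.reₗ (-1) 0) h1
    have h4 : (QuadraticAlgebra.reₗ (-1) 0) (∑ σ, (ell σ x)^2) = ∑ σ, ((ell σ x)^2).re := map_sum _ _ _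
    rw [h4] at h3
    refine Eq.trans ?_ (h3.trans ?_)
    · simp only [QuadraticAlgebra.reₗ_apply, QuadraticAlgebra.algebraMap_re]
    apply Finset.sum_congr rfl; intro σ _
    simp [sq]; ring

theorem hom_transfer {L' : Type*} [Field L'] [LinearOrder L'] [IsStrictOrderedRing L'] [IsRealClosed L']
    [Algebra F L'] [CharZero F] (hs : ∀ a : F, 0 < algebraMap F L a ↔ 0 < algebraMap F L' a)
    {K : Type*} [Field K] [Algebra F K] [FiniteDimensional F K] (h : Nonempty (K →ₐ[F] L)) :
    Nonempty (K →ₐ[F] L') := by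
  have : Invertible (2 : F) := invertibleOfNonzero two_ne_zero
  obtain ⟨v, hv⟩ := LinearMap.BilinForm.exists_orthogonal_basis (B := Algebra.traceForm F K) (V := K) ⟨fun x y => by simp [Algebra.traceForm_apply, mul_comm]⟩
  rw [signature_trace v hv] at h ⊢
  simpa only [hs] using h
end


section part3
variable {R : Type*} [Field R] [LinearOrder R] [IsStrictOrderedRing R] [IsRealClosed R]
variable {L : Type*} [Field L] [LinearOrder L] [IsStrictOrderedRing L] 

theorem rc_algebraMap_nonneg [Algebra R L] {a : R} (ha : 0 ≤ a) : 0 ≤ algebraMap R L a := by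
  obtain ⟨y, -, rfl⟩ := rc_sqrt ha
  rw [map_pow]; positivity

theorem rc_algebraMap_pos [Algebra R L] {a : R} (ha : 0 < a) : 0 < algebraMap R L a :=
  lt_of_le_of_ne (rc_algebraMap_nonneg ha.le) (by rw [ne_comm, _root_.map_ne_zero]; exact ha.ne')

theorem rc_irred_natDegree (q : R[X]) (hq : Irreducible q) : q.natDegree = 1 ∨ q.natDegree = 2 := by
  have h0 := hq.natDegree_pos
  obtain ⟨z, hz⟩ := IsAlgClosed.exists_aeval_eq_zero (CC R) q (by
    rw [Polynomial.degree_eq_natDegree hq.ne_zero]; exact_mod_cast h0.ne')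
  have h1 := minpoly.eq_of_irreducible hq hz
  have h2 := minpoly.natDegree_le (A := R) z
  rw [← h1, natDegree_mul_C (by simpa using hq.ne_zero), QuadraticAlgebra.finrank_eq_two] at h2
  omega

theorem rc_sign (U : Filter R) [Algebra R L] (t : L)
    (h1 : ∀ r, algebraMap R L r < t → ∀ᶠ c in U, r < c)
    (h2 : ∀ r, t < algebraMap R L r → ∀ᶠ c in U, c < r) (ht : t ∉ Set.range (algebraMap R L)) (p : R[X]) (hp : p ≠ 0) :
    (0 < aeval t p ∧ ∀ᶠ c in U, 0 < eval c p) ∨ (aeval t p < 0 ∧ ∀ᶠ c in U, eval c p < 0) := by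
  have hC : ∀ a : R, a ≠ 0 → (0 < aeval t (C a) ∧ ∀ᶠ c in U, 0 < eval c (C a)) ∨ (aeval t (C a) < 0 ∧ ∀ᶠ c in U, eval c (C a) < 0) := by
    intro a ha
    rcases lt_or_gt_of_ne ha with h | h
    · right; simp only [aeval_C, eval_C]; 
      have := rc_algebraMap_pos (L := L) (neg_pos.2 h)
      rw [map_neg] at this
      exact ⟨by linarith, Filter.Eventually.of_forall fun _ => h⟩
    · left; simp only [aeval_C, eval_C]
      exact ⟨rc_algebraMap_pos h, Filter.Eventually.of_forall fun _ => h⟩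
  have hmul : ∀ p q : R[X], ((0 < aeval t p ∧ ∀ᶠ c in U, 0 < eval c p) ∨ (aeval t p < 0 ∧ ∀ᶠ c in U, eval c p < 0)) →
     ((0 < aeval t q ∧ ∀ᶠ c in U, 0 < eval c q) ∨ (aeval t q < 0 ∧ ∀ᶠ c in U, eval c q < 0)) →
     ((0 < aeval t (p*q) ∧ ∀ᶠ c in U, 0 < eval c (p*q)) ∨ (aeval t (p*q) < 0 ∧ ∀ᶠ c in U, eval c (p*q) < 0)) := by
    rintro p q (⟨a, b⟩ | ⟨a, b⟩) (⟨c, d⟩ | ⟨c, d⟩) <;> simp only [map_mul, eval_mul]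
    · left; exact ⟨mul_pos a c, by filter_upwards [b, d] with x h h'; exact mul_pos h h'⟩
    · right; exact ⟨mul_neg_of_pos_of_neg a c, by filter_upwards [b, d] with x h h'; exact mul_neg_of_pos_of_neg h h'⟩
    · right; exact ⟨mul_neg_of_neg_of_pos a c, by filter_upwards [b, d] with x h h'; exact mul_neg_of_neg_of_pos h h'⟩
    · left; exact ⟨mul_pos_of_neg_of_neg a c, by filter_upwards [b, d] with x h h'; exact mul_pos_of_neg_of_neg h h'⟩
  induction p using WfDvdMonoid.induction_on_irreducible with
  | zero => exact absurd rfl hp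
  | unit u hu =>
    obtain ⟨a, ha, rfl⟩ := Polynomial.isUnit_iff.1 hu
    exact hC a ha.ne_zero
  | mul a i ha hi ih =>
    refine hmul _ _ ?_ (ih ha)
    rcases rc_irred_natDegree i hi with h | h
    · obtain ⟨a, b, rfl⟩ := exists_eq_X_add_C_of_natDegree_le_one h.le
      have ha : a ≠ 0 := by rintro rfl; simp at h
      have : C a * X + C b = C a * (X - C (-b/a)) := by
        rw [mul_sub, ← C_mul, mul_div_cancel₀ _ ha]; simp
      rw [this]
      refine hmul _ _ (hC _ ha) ?_
      have hne : algebraMap R L (-b/a) ≠ t := fun h => ht ⟨_, h⟩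
      rcases lt_or_gt_of_ne hne with h | h
      · left
        refine ⟨by simpa using h, ?_⟩
        filter_upwards [h1 _ h] with c hc
        simpa using hc
      · right
        refine ⟨by simpa using h, ?_⟩
        filter_upwards [h2 _ h] with c hc
        simpa using hc
    · have h3 := eq_quadratic_of_degree_le_two (p := i) (natDegree_le_iff_degree_le.1 h.le)
      set α := i.coeff 2 with hα
      set β := i.coeff 1
      set γ := i.coeff 0
      have hα0 : α ≠ 0 := by
        rw [hα, ← h]; simpa using hi.ne_zero
      have hd : discrim α β γ < 0 := by
        by_contra hd
        push Not at hd
        obtain ⟨s, -, hs⟩ := rc_sqrt hd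
        obtain ⟨x, hx⟩ := exists_quadratic_eq_zero hα0 ⟨s, by rw [← hs, sq]⟩
        have : i.IsRoot x := by rw [h3]; simp; linear_combination hx
        have h5 := Polynomial.degree_eq_one_of_irreducible_of_root hi this
        rw [Polynomial.degree_eq_natDegree hi.ne_zero, h] at h5
        norm_num at h5
      have h4 : i * (C 4 * C α) = (C 2 * C α * X + C β)^2 + C (-discrim α β γ) := by
        rw [h3]; simp only [discrim, C_neg, C_sub, C_mul, C_pow, map_ofNat]; ring
      have hgood : (0 < aeval t (i * (C 4 * C α)) ∧ ∀ c, 0 < eval c (i * (C 4 * C α))) := by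
        rw [h4]
        constructor
        · simp only [map_add, map_pow, aeval_C]
          have := rc_algebraMap_pos (L := L) (neg_pos.2 hd)
          positivity
        · intro c
          simp only [eval_add, eval_pow, eval_C]
          have := neg_pos.2 hd
          positivity
      simp only [map_mul, eval_mul, aeval_C, eval_C, map_ofNat, eval_ofNat] at hgood
      obtain ⟨g1, g2⟩ := hgood
      rcases lt_or_gt_of_ne hα0 with h | h
      · right
        have h9 := rc_algebraMap_pos (L := L) (neg_pos.2 h)
        rw [map_neg] at h9
        refine ⟨by by_contra! hh; nlinarith, Filter.Eventually.of_forall fun c => ?_⟩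
        have := g2 c
        by_contra! hh
        nlinarith
      · left
        have h9 := rc_algebraMap_pos (L := L) h
        refine ⟨by by_contra! hh; nlinarith, Filter.Eventually.of_forall fun c => ?_⟩
        have := g2 c
        by_contra! hh
        nlinarith

theorem exists_cut_ultrafilter [Algebra R L] (t : L) : ∃ U : Ultrafilter R,
    (∀ r, algebraMap R L r < t → ∀ᶠ c in (U : Filter R), r < c) ∧
    (∀ r, t < algebraMap R L r → ∀ᶠ c in (U : Filter R), c < r) := by
  classical
  obtain ⟨U, hU⟩ := Ultrafilter.exists_ultrafilter_of_finite_inter_nonempty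
    ({s : Set R | ∃ r, algebraMap R L r < t ∧ s = Set.Ioi r} ∪ {s | ∃ r, t < algebraMap R L r ∧ s = Set.Iio r}) (by
      intro T hT
      have : ∃ A B : Finset R, (∀ a ∈ A, algebraMap R L a < t) ∧ (∀ b ∈ B, t < algebraMap R L b) ∧
          ∀ c, (∀ a ∈ A, a < c) → (∀ b ∈ B, c < b) → ∀ s ∈ T, c ∈ s := by
        induction T using Finset.induction_on with
        | empty => exact ⟨∅, ∅, by simp⟩
        | insert s T hs ih =>
          rw [Finset.coe_insert, Set.insert_subset_iff] at hT
          obtain ⟨A, B, h1, h2, h3⟩ := ih hT.2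
          rcases hT.1 with ⟨r, hr, rfl⟩ | ⟨r, hr, rfl⟩
          · refine ⟨insert r A, B, by simp; exact ⟨hr, h1⟩, h2, fun c hA hB s hs => ?_⟩
            simp only [Finset.forall_mem_insert] at hA
            rcases Finset.mem_insert.1 hs with rfl | hs
            · exact hA.1
            · exact h3 c hA.2 hB s hs
          · refine ⟨A, insert r B, h1, by simp; exact ⟨hr, h2⟩, fun c hA hB s hs => ?_⟩
            simp only [Finset.forall_mem_insert] at hB
            rcases Finset.mem_insert.1 hs with rfl | hs
            · exact hB.1
            · exact h3 c hA hB.2 s hs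
      obtain ⟨A, B, h1, h2, h3⟩ := this
      have hAB : ∀ a ∈ A, ∀ b ∈ B, a < b := by
        intro a ha b hb
        by_contra! hh
        have := rc_algebraMap_nonneg (L := L) (sub_nonneg.2 hh)
        rw [map_sub] at this
        linarith [h1 a ha, h2 b hb]
      obtain ⟨c, hc1, hc2⟩ := Order.exists_between_finsets A B hAB
      exact ⟨c, by simpa using h3 c hc1 hc2⟩)
  refine ⟨U, fun r hr => hU (Or.inl ⟨r, hr, rfl⟩), fun r hr => hU (Or.inr ⟨r, hr, rfl⟩)⟩

instance germ_realClosed {α : Type*} (U : Ultrafilter α) : IsRealClosed (Filter.Germ (U : Filter α) R) := by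
  apply IsRealClosed.of_linearOrderedField
  · intro x hx
    induction x using Filter.Germ.inductionOn with | _ f =>
    have h1 : ∀ᶠ c in (U : Filter α), 0 ≤ f c := Filter.Germ.coe_nonneg.1 hx
    have : ∀ c, ∃ y, 0 ≤ f c → f c = y * y := by
      intro c
      by_cases h : 0 ≤ f c
      · obtain ⟨y, -, hy⟩ := rc_sqrt h; exact ⟨y, fun _ => by rw [← hy, sq]⟩
      · exact ⟨0, fun h' => absurd h' h⟩
    choose y hy using this
    refine ⟨(y : Filter.Germ (U : Filter α) R), ?_⟩
    rw [← Filter.Germ.coe_mul, Filter.Germ.coe_eq]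
    filter_upwards [h1] with c hc
    exact hy c hc
  · intro f hf
    let φ : (α → R) →+* Filter.Germ (U : Filter α) R := Filter.Germ.coeRingHom _
    have hφ : Function.Surjective φ := by
      intro x
      induction x using Filter.Germ.inductionOn with | _ f => exact ⟨f, rfl⟩
    have hf0 : f ≠ 0 := by rintro rfl; simp at hf
    obtain ⟨q, hq, hqd⟩ := Polynomial.exists_degree_eq_of_mem_lifts (f := φ) (p := f) (by
      rw [Polynomial.lifts_iff_coeff_lifts]; intro n; exact hφ _)
    replace hqd := natDegree_eq_of_degree_eq hqd
    have hl : φ q.leadingCoeff ≠ 0 := by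
      rw [leadingCoeff, hqd, ← coeff_map, hq]; simpa using hf0
    have hl' : ∀ᶠ c in (U : Filter α), q.leadingCoeff c ≠ 0 := by
      rw [Ultrafilter.eventually_not]
      intro h
      exact hl (Filter.Germ.coe_eq.2 h)
    have : ∀ c, ∃ r, q.leadingCoeff c ≠ 0 → (q.map (Pi.evalRingHom (fun _ => R) c)).IsRoot r := by
      intro c
      by_cases h : q.leadingCoeff c ≠ 0
      · obtain ⟨r, hr⟩ := IsRealClosed.exists_isRoot_of_odd_natDegree (f := q.map (Pi.evalRingHom (fun _ => R) c)) (by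
          rw [natDegree_map_of_leadingCoeff_ne_zero _ h, hqd]; exact hf)
        exact ⟨r, fun _ => hr⟩
      · exact ⟨0, fun h' => absurd h' h⟩
    choose r hr using this
    refine ⟨φ r, ?_⟩
    rw [IsRoot, ← hq, eval_map_apply]
    change ((eval r q : α → R) : Filter.Germ (U : Filter α) R) = ((0 : α → R) : Filter.Germ (U : Filter α) R)
    rw [Filter.Germ.coe_eq]
    filter_upwards [hl'] with c hc
    have := hr c hc
    rw [IsRoot, show r c = Pi.evalRingHom (fun _ => R) c r from rfl, eval_map_apply] at this
    exact this
end part3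


section part4
variable {R : Type*} [Field R] [LinearOrder R] [IsStrictOrderedRing R] [IsRealClosed R]
variable {L : Type*} [Field L] [LinearOrder L] [IsStrictOrderedRing L] 

noncomputable instance germAlgebra {α : Type*} (U : Ultrafilter α) : Algebra R (Filter.Germ (U : Filter α) R) :=
  ((Filter.Germ.coeRingHom (U : Filter α)).comp (Pi.constRingHom α R)).toAlgebra

theorem germ_aeval (U : Ultrafilter R) (p : R[X]) :
    aeval ((fun c => c : R → R) : Filter.Germ (U : Filter R) R) p = ((fun c => eval c p : R → R) : Filter.Germ (U : Filter R) R) := by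
  have h1 : aeval ((fun c => c : R → R) : Filter.Germ (U : Filter R) R) p =
     Filter.Germ.coeRingHom (U : Filter R) (eval₂ (Pi.constRingHom R R) (fun c => c) p) := by
    rw [hom_eval₂]; rfl
  rw [h1]
  change ((eval₂ (Pi.constRingHom R R) (fun c => c) p : R → R) : Filter.Germ (U : Filter R) R) = _
  congr 1
  ext c
  have := hom_eval₂ p (Pi.constRingHom R R) (Pi.evalRingHom (fun _ => R) c) (fun c => c)
  exact this

theorem algHom_mvAeval {σ A B C : Type*} [CommRing A] [CommRing B] [CommRing C] [Algebra A B] [Algebra A C]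
    (φ : B →ₐ[A] C) (x : σ → B) (p : MvPolynomial σ A) :
    φ (MvPolynomial.aeval x p) = MvPolynomial.aeval (fun i => φ (x i)) p := by
  have := MvPolynomial.comp_aeval_apply x φ p
  exact this

theorem exists_germ_hom [Algebra R L] (t : L) (ht : t ∉ Set.range (algebraMap R L)) :
    ∃ (U : Ultrafilter R) (Ψ : IntermediateField.adjoin R {t} →ₐ[R] Filter.Germ (U : Filter R) R),
      ∀ a, 0 < Ψ a ↔ 0 < (a : L) := by
  obtain ⟨U, h1, h2⟩ := exists_cut_ultrafilter (R := R) t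
  have hsign := fun p hp => rc_sign (U : Filter R) t h1 h2 ht p hp
  let τ : Filter.Germ (U : Filter R) R := ((fun c => c : R → R) : Filter.Germ (U : Filter R) R)
  have hτ : ∀ p : R[X], p ≠ 0 → (0 < aeval t p ∧ 0 < aeval τ p) ∨ (aeval t p < 0 ∧ aeval τ p < 0) := by
    intro p hp
    rw [germ_aeval]
    rcases hsign p hp with h | h
    · left; exact ⟨h.1, Filter.Germ.coe_pos.2 h.2⟩
    · right; exact ⟨h.1, Filter.Germ.coe_lt.2 h.2⟩
  have tr1 : Transcendental R t := by
    rw [transcendental_iff]; intro p hp; by_contra h0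
    rcases hτ p h0 with h | h <;> linarith [h.1]
  have tr2 : Transcendental R τ := by
    rw [transcendental_iff]; intro p hp; by_contra h0
    rcases hτ p h0 with h | h
    · exact h.2.ne' hp
    · exact h.2.ne hp
  let e1 := RatFunc.algEquivOfTranscendental t tr1
  let e2 := RatFunc.algEquivOfTranscendental τ tr2
  refine ⟨U, (IntermediateField.val _).comp (e2.toAlgHom.comp e1.symm.toAlgHom), ?_⟩
  intro a
  obtain ⟨b, rfl⟩ := e1.surjective a
  have hb : ((IntermediateField.val _).comp (e2.toAlgHom.comp e1.symm.toAlgHom)) (e1 b) = ((e2 b : _) : Filter.Germ (U : Filter R) R) := by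
    simp
  rw [hb]
  obtain ⟨p, q, hq, rfl⟩ := IsFractionRing.div_surjective (A := R[X]) b
  have hq0 : q ≠ 0 := nonZeroDivisors.ne_zero hq
  have f1 : ∀ p, ((e1 (algebraMap R[X] (RatFunc R) p) : _) : L) = aeval t p := by
    intro p; simp [e1]
  have f2 : ∀ p, ((e2 (algebraMap R[X] (RatFunc R) p) : _) : Filter.Germ (U : Filter R) R) = aeval τ p := by
    intro p; simp [e2]
  rw [map_div₀, map_div₀, IntermediateField.coe_div, IntermediateField.coe_div, f1, f1, f2, f2]
  by_cases hp : p = 0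
  · simp [hp]
  rcases hτ p hp with h | h <;> rcases hτ q hq0 with h' | h'
  · simp [div_pos h.1 h'.1, div_pos h.2 h'.2]
  · simp [(div_neg_of_pos_of_neg h.1 h'.1).not_gt, (div_neg_of_pos_of_neg h.2 h'.2).not_gt]
  · simp [(div_neg_of_neg_of_pos h.1 h'.1).not_gt, (div_neg_of_neg_of_pos h.2 h'.2).not_gt]
  · simp [div_pos_of_neg_of_neg h.1 h'.1, div_pos_of_neg_of_neg h.2 h'.2]

theorem rc_step {σ : Type*} [Finite σ] [IsRealClosed L] [Algebra R L] (t : L) (ht : t ∉ Set.range (algebraMap R L)) (x : σ → L)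
    (hx : ∀ i, IsAlgebraic (IntermediateField.adjoin R {t}) (x i)) (S : Finset (MvPolynomial σ R))
    (hS : ∀ p ∈ S, MvPolynomial.aeval x p = 0) : ∃ y : σ → R, ∀ p ∈ S, MvPolynomial.eval y p = 0 := by
  obtain ⟨U, Ψ, hΨ⟩ := exists_germ_hom t ht
  let : Algebra (IntermediateField.adjoin R {t}) (Filter.Germ (U : Filter R) R) := Ψ.toRingHom.toAlgebra
  have : IsScalarTower R (IntermediateField.adjoin R {t}) (Filter.Germ (U : Filter R) R) :=
    IsScalarTower.of_algebraMap_eq fun r => (Ψ.commutes r).symm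
  let K := IntermediateField.adjoin (IntermediateField.adjoin R {t}) (Set.range x)
  have : FiniteDimensional (IntermediateField.adjoin R {t}) K := by
    have : Finite (Set.range x) := Set.finite_range x
    apply IntermediateField.finiteDimensional_adjoin
    rintro _ ⟨i, rfl⟩
    exact (hx i).isIntegral
  have : CharZero (IntermediateField.adjoin R {t}) := 
    charZero_of_injective_algebraMap (algebraMap R (IntermediateField.adjoin R {t})).injective
  obtain ⟨ρ⟩ := hom_transfer (L := L) (L' := Filter.Germ (U : Filter R) R) (K := K) (fun a => (hΨ a).symm) ⟨K.val⟩
  let x' : σ → K := fun i => ⟨x i, IntermediateField.subset_adjoin _ _ ⟨i, rfl⟩⟩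
  have hx' : ∀ p ∈ S, MvPolynomial.aeval x' p = 0 := by
    intro p hp
    have h1 := algHom_mvAeval (K.val.restrictScalars R) x' p
    apply Subtype.ext
    exact h1.trans (hS p hp)
  have hsurj : ∀ z : Filter.Germ (U : Filter R) R, ∃ f : R → R, (f : Filter.Germ (U : Filter R) R) = z := by
    intro z; induction z using Filter.Germ.inductionOn with | _ f => exact ⟨f, rfl⟩
  choose f hf using fun i => hsurj (ρ (x' i))
  have hev : ∀ p ∈ S, ∀ᶠ c in (U : Filter R), MvPolynomial.eval (fun i => f i c) p = 0 := by
    intro p hp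
    have h1 : MvPolynomial.aeval (fun i => ρ (x' i)) p = 0 := by
      have := congrArg (ρ.restrictScalars R) (hx' p hp)
      rw [map_zero, algHom_mvAeval] at this
      exact this
    have h2 : MvPolynomial.aeval (fun i => ρ (x' i)) p = 
       Filter.Germ.coeRingHom (U : Filter R) (MvPolynomial.eval₂ (Pi.constRingHom R R) f p) := by
      rw [MvPolynomial.hom_eval₂]; simp only [← hf]; rfl
    rw [h2] at h1
    have h3 := Filter.Germ.coe_eq.1 (h1 : ((MvPolynomial.eval₂ (Pi.constRingHom R R) f p : R → R) : Filter.Germ (U : Filter R) R) = ((0 : R → R) : Filter.Germ (U : Filter R) R))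
    filter_upwards [h3] with c hc
    have := MvPolynomial.hom_eval₂ p (Pi.constRingHom R R) (Pi.evalRingHom (fun _ => R) c) f
    rw [Pi.evalRingHom_apply, hc] at this
    exact this.symm
  have hall : ∀ᶠ c in (U : Filter R), ∀ p ∈ S, MvPolynomial.eval (fun i => f i c) p = 0 := by
    rw [Filter.eventually_all_finset]; exact hev
  obtain ⟨c, hc⟩ := hall.exists
  exact ⟨fun i => f i c, hc⟩
end part4


section part5

theorem sumSq_map {A B : Type*} [CommRing A] [CommRing B] (φ : A →+* B) {s : A} (hs : IsSumSq s) : IsSumSq (φ s) := by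
  induction hs with
  | zero => rw [map_zero]; exact IsSumSq.zero
  | sq_add a hs ih => rw [map_add, map_mul]; exact IsSumSq.sq_add _ ih

theorem rc_exists_order (R : Type*) [Field R] [IsRealClosed R] : ∃ (_ : LinearOrder R), IsStrictOrderedRing R := by
  classical
  have hcone : ∀ a : R, IsSumSq a → IsSumSq (-a) → a = 0 := by
    intro a h1 h2
    by_contra h0
    apply IsSemireal.not_isSumSq_neg_one R
    have := (h1.mul h2).mul (IsSumSq.mul_self (a⁻¹))
    have e : a * -a * (a⁻¹ * a⁻¹) = -1 := by field_simp
    rwa [e] at this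
  let O : LinearOrder R :=
    { le := fun a b => IsSumSq (b - a)
      le_refl := fun a => by simp
      le_trans := fun a b c h1 h2 => by
        have := IsSumSq.add h1 h2
        have e : b - a + (c - b) = c - a := by ring
        rwa [e] at this
      le_antisymm := fun a b h1 h2 => by
        have := hcone (b - a) h1 (by rw [neg_sub]; exact h2)
        exact (sub_eq_zero.1 this).symm
      le_total := fun a b => by
        rcases IsRealClosed.isSquare_or_isSquare_neg (b - a) with h | h
        · exact Or.inl h.isSumSq
        · rw [neg_sub] at h; exact Or.inr h.isSumSq
      toDecidableLE := Classical.decRel _ }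
  have hle : ∀ a b : R, a ≤ b ↔ IsSumSq (b - a) := fun a b => Iff.rfl
  have : IsOrderedAddMonoid R := ⟨fun a b h c => by
    rw [hle] at h ⊢; rwa [add_sub_add_right_eq_sub], fun a b h c => by
    rw [hle] at h ⊢; rwa [add_sub_add_left_eq_sub]⟩
  have : ZeroLEOneClass R := ⟨by rw [hle, sub_zero]; exact IsSumSq.one⟩
  refine ⟨O, IsStrictOrderedRing.of_mul_pos ?_⟩
  intro a b ha hb
  have h1 : IsSumSq a := by simpa [hle] using ha.le
  have h2 : IsSumSq b := by simpa [hle] using hb.le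
  have h3 : 0 ≤ a * b := by rw [hle, sub_zero]; exact h1.mul h2
  exact lt_of_le_of_ne h3 (mul_ne_zero ha.ne' hb.ne').symm

theorem rc_step' {R L : Type*} [Field R] [Field L] [IsRealClosed R] {σ : Type*} [Finite σ] [IsRealClosed L] [Algebra R L] (t : L) (x : σ → L)
    (hx : ∀ i, IsAlgebraic (IntermediateField.adjoin R {t}) (x i)) (S : Finset (MvPolynomial σ R))
    (hS : ∀ p ∈ S, MvPolynomial.aeval x p = 0) : ∃ y : σ → R, ∀ p ∈ S, MvPolynomial.eval y p = 0 := by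
  obtain ⟨_, _⟩ := rc_exists_order R
  obtain ⟨_, _⟩ := rc_exists_order L
  by_cases ht : t ∈ Set.range (algebraMap R L)
  · have halg : ∀ i, IsAlgebraic R (x i) := by
      intro i
      have : IntermediateField.adjoin R {t} = ⊥ := by
        rw [IntermediateField.adjoin_simple_eq_bot_iff]; exact IntermediateField.mem_bot.2 ht
      have h1 := hx i
      rw [this] at h1
      have : Algebra.IsAlgebraic R (⊥ : IntermediateField R L) := inferInstance
      exact h1.restrictScalars R
    have hr : ∀ i, ∃ r, algebraMap R L r = x i := by
      intro i
      by_contra hno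
      obtain ⟨U, h1, h2⟩ := exists_cut_ultrafilter (R := R) (x i)
      obtain ⟨p, hp, hp0⟩ := halg i
      rcases rc_sign (U : Filter R) (x i) h1 h2 hno p hp with h | h <;> linarith [h.1]
    choose y hy using hr
    refine ⟨y, fun p hp => ?_⟩
    apply (algebraMap R L).injective
    have := hS p hp
    rw [← funext hy] at this
    rw [map_zero, ← this]
    exact algHom_mvAeval (Algebra.ofId R L) y p
  · exact rc_step t ht x hx S hS

theorem rc_of_relClosed {R L : Type*} [Field R] [Field L] [IsRealClosed L] [Algebra R L]
    (h : ∀ x : L, IsAlgebraic R x → x ∈ Set.range (algebraMap R L)) : IsRealClosed R where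
  one_add_ne_zero hs h0 := by
    apply IsSemireal.one_add_ne_zero (sumSq_map (algebraMap R L) hs)
    rw [← map_one (algebraMap R L), ← map_add, h0, map_zero]
  isSquare_or_isSquare_neg x := by
    have key : ∀ x : R, IsSquare (algebraMap R L x) → IsSquare x := by
      rintro x ⟨y, hy⟩
      have : IsAlgebraic R y := by
        refine ⟨X^2 - C x, (monic_X_pow_sub_C x two_ne_zero).ne_zero, ?_⟩
        simp [hy, sq]
      obtain ⟨z, rfl⟩ := h y this
      exact ⟨z, (algebraMap R L).injective (by rw [hy, map_mul])⟩
    rcases IsRealClosed.isSquare_or_isSquare_neg (algebraMap R L x) with hh | hh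
    · exact Or.inl (key _ hh)
    · rw [← map_neg] at hh; exact Or.inr (key _ hh)
  exists_isRoot_of_odd_natDegree {f} hf := by
    obtain ⟨x, hx⟩ := IsRealClosed.exists_isRoot_of_odd_natDegree (f := f.map (algebraMap R L)) (by rwa [natDegree_map])
    have : IsAlgebraic R x := ⟨f, by rintro rfl; simp at hf, by rwa [IsRoot, eval_map_algebraMap] at hx⟩
    obtain ⟨z, rfl⟩ := h x this
    refine ⟨z, (algebraMap R L).injective ?_⟩
    rw [IsRoot, eval_map_apply] at hx
    rw [hx, map_zero]

universe u
theorem rc_chain {σ : Type*} [Finite σ] {L : Type u} [Field L] [IsRealClosed L] (s : Finset L) :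
    ∀ (R : Type u) [Field R] [IsRealClosed R] [Algebra R L] (x : σ → L)
    (_ : ∀ i, IsAlgebraic (IntermediateField.adjoin R (s : Set L)) (x i)) (S : Finset (MvPolynomial σ R))
    (_ : ∀ p ∈ S, MvPolynomial.aeval x p = 0), ∃ y : σ → R, ∀ p ∈ S, MvPolynomial.eval y p = 0 := by
  classical
  induction s using Finset.induction_on with
  | empty =>
    intro R _ _ _ x hx S hS
    refine rc_step' (L := L) 0 x ?_ S hS
    have : IntermediateField.adjoin R {(0 : L)} = IntermediateField.adjoin R ((∅ : Finset L) : Set L) := by simp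
    rw [this]; exact hx
  | insert a s has ih =>
    intro R _ _ _ x hx S hS
    let F := IntermediateField.adjoin R {a}
    let M := algebraicClosure F L
    have : IsScalarTower R M L := IsScalarTower.of_algebraMap_eq fun r => rfl
    have : IsRealClosed M := rc_of_relClosed (L := L) (by
      intro x hx
      have h1 : x ∈ algebraicClosure M L := mem_algebraicClosure_iff.2 hx
      rw [algebraicClosure.algebraicClosure_eq_bot] at h1
      exact IntermediateField.mem_bot.1 h1)
    obtain ⟨y, hy⟩ := ih M x (by
      intro i
      have hle : IntermediateField.adjoin R ((insert a s : Finset L) : Set L) ≤ (IntermediateField.adjoin M (s : Set L)).restrictScalars R := by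
        rw [IntermediateField.adjoin_le_iff, Finset.coe_insert, Set.insert_subset_iff]
        constructor
        · have haF : a ∈ F := IntermediateField.mem_adjoin_simple_self R a
          exact (IntermediateField.adjoin M (s : Set L)).algebraMap_mem (algebraMap F M ⟨a, haF⟩)
        · exact IntermediateField.subset_adjoin M (s : Set L)
      let : Algebra (IntermediateField.adjoin R ((insert a s : Finset L) : Set L)) (IntermediateField.adjoin M (s : Set L)) :=
        (IntermediateField.inclusion hle).toRingHom.toAlgebra
      have : IsScalarTower (IntermediateField.adjoin R ((insert a s : Finset L) : Set L)) (IntermediateField.adjoin M (s : Set L)) L :=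
        IsScalarTower.of_algebraMap_eq fun r => rfl
      exact (hx i).extendScalars (RingHom.injective _)) (S.image (MvPolynomial.map (algebraMap R M))) (by
        intro p hp
        obtain ⟨q, hq, rfl⟩ := Finset.mem_image.1 hp
        rw [MvPolynomial.aeval_map_algebraMap]
        exact hS q hq)
    refine rc_step' (L := L) a (fun i => (y i : L)) (fun i => mem_algebraicClosure_iff.1 (y i).2) S ?_
    intro p hp
    have h1 := hy _ (Finset.mem_image_of_mem _ hp)
    rw [MvPolynomial.eval_map] at h1
    have h2 := algHom_mvAeval (IsScalarTower.toAlgHom R M L) y p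
    rw [show MvPolynomial.aeval y p = 0 from h1, map_zero] at h2
    exact h2.symm
end part5


section part6
universe u

theorem exists_semireal_point {C : Type u} [CommRing C] (g : C) (h : ∀ k : ℕ, ∀ s : C, IsSumSq s → g ^ (2 * k) + s ≠ 0) :
    ∃ (κ : Type u) (_ : Field κ) (φ : C →+* κ), IsSemireal κ ∧ φ g ≠ 0 := by
  have hsq : ∀ k : ℕ, IsSumSq (g ^ (2*k)) := fun k => by
    rw [two_mul, pow_add]; exact IsSumSq.mul_self _
  let T : Submonoid C :=
    { carrier := {t | ∃ k : ℕ, ∃ s, IsSumSq s ∧ t = g ^ (2 * k) + s}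
      one_mem' := ⟨0, 0, IsSumSq.zero, by simp⟩
      mul_mem' := by
        rintro _ _ ⟨k, s, hs, rfl⟩ ⟨j, t, ht, rfl⟩
        refine ⟨k + j, g ^ (2*k) * t + (s * g ^ (2 * j) + s * t), ((hsq k).mul ht).add ((hs.mul (hsq j)).add (hs.mul ht)), by ring⟩ }
  have hT : ∀ t ∈ T, ∀ s, IsSumSq s → t + s ∈ T := by
    rintro _ ⟨k, s, hs, rfl⟩ t ht
    exact ⟨k, s + t, hs.add ht, by ring⟩
  have h0 : (0 : C) ∉ T := by
    rintro ⟨k, s, hs, h1⟩; exact h k s hs h1.symm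
  let B := Localization T
  have : Nontrivial B := by
    rw [← not_subsingleton_iff_nontrivial, IsLocalization.subsingleton_iff (S := B) (M := T)]
    exact h0
  have hg : g * g ∈ T := ⟨1, 0, IsSumSq.zero, by ring⟩
  obtain ⟨m, hm⟩ := Ideal.exists_maximal B
  have hunit : ∀ t ∈ T, IsUnit (algebraMap C B t) := fun t ht => IsLocalization.map_units B ⟨t, ht⟩
  have hlift : ∀ s : B ⧸ m, IsSumSq s → ∃ t ∈ T, ∃ s' : C, IsSumSq s' ∧
      Ideal.Quotient.mk m (algebraMap C B s') = Ideal.Quotient.mk m (algebraMap C B (t * t)) * s := by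
    intro s hs
    induction hs with
    | zero => exact ⟨1, T.one_mem, 0, IsSumSq.zero, by simp⟩
    | @sq_add a s hs ih =>
      obtain ⟨t, ht, s', hs', h1⟩ := ih
      obtain ⟨a, rfl⟩ := Ideal.Quotient.mk_surjective a
      obtain ⟨⟨b, t2⟩, hb⟩ := IsLocalization.surj T a
      refine ⟨t * t2, T.mul_mem ht t2.2, (b * t) * (b * t) + (t2 * t2) * s', IsSumSq.sq_add _ ((IsSumSq.mul_self _).mul hs'), ?_⟩
      simp only [map_add, map_mul] at h1 hb ⊢
      rw [h1, ← hb]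
      simp only [map_mul]
      ring
  let _ : Field (B ⧸ m) := Ideal.Quotient.field m
  refine ⟨B ⧸ m, inferInstance, (Ideal.Quotient.mk m).comp (algebraMap C B), ⟨?_⟩, ?_⟩
  · intro s hs h1
    obtain ⟨t, ht, s', hs', h2⟩ := hlift s hs
    have h3 := hunit _ (hT (t * t) (T.mul_mem ht ht) s' hs')
    have h4 := (h3.map (Ideal.Quotient.mk m)).ne_zero
    apply h4
    rw [map_add, map_add, h2, ← mul_one_add, h1, mul_zero]
  · have := ((hunit _ hg).map (Ideal.Quotient.mk m)).ne_zero
    intro h1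
    apply this
    rw [map_mul, map_mul]
    rw [RingHom.comp_apply] at h1
    rw [h1, mul_zero]

theorem sumSq_cone {R : Type*} [Field R] [IsSemireal R] (a : R) (h1 : IsSumSq a) (h2 : IsSumSq (-a)) : a = 0 := by
  by_contra h0
  apply IsSemireal.not_isSumSq_neg_one R
  have := (h1.mul h2).mul (IsSumSq.mul_self (a⁻¹))
  have e : a * -a * (a⁻¹ * a⁻¹) = -1 := by field_simp
  rwa [e] at this

theorem sumSq_poly {E : Type*} [Field E] [IsSemireal E] {p : E[X]} (hp : IsSumSq p) :
    p = 0 ∨ (Even p.natDegree ∧ IsSumSq p.leadingCoeff) := by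
  induction hp with
  | zero => exact Or.inl rfl
  | @sq_add a s hs ih =>
    by_cases ha : a = 0
    · simpa [ha] using ih
    right
    have e1 : Even (a * a).natDegree := by rw [natDegree_mul ha ha]; exact ⟨_, rfl⟩
    have e2 : IsSumSq (a * a).leadingCoeff := by rw [leadingCoeff_mul]; exact IsSumSq.mul_self _
    have ha2 : a * a ≠ 0 := mul_ne_zero ha ha
    rcases ih with rfl | ⟨i1, i2⟩
    · rw [add_zero]; exact ⟨e1, e2⟩
    by_cases hs0 : s = 0
    · rw [hs0, add_zero]; exact ⟨e1, e2⟩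
    rcases lt_trichotomy (a * a).natDegree s.natDegree with h | h | h
    · rw [natDegree_add_eq_right_of_natDegree_lt h, leadingCoeff_add_of_degree_lt (degree_lt_degree h)]
      exact ⟨i1, i2⟩
    · have hne : (a*a).leadingCoeff + s.leadingCoeff ≠ 0 := by
        intro h0
        have := sumSq_cone _ e2 (by rw [← eq_neg_of_add_eq_zero_right h0]; exact i2)
        exact ha2 (by simpa using this)
      have hd : (a * a).degree = s.degree := by
        rw [degree_eq_natDegree ha2, degree_eq_natDegree hs0, h]
      have hl := leadingCoeff_add_of_degree_eq hd hne
      rw [hl]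
      refine ⟨?_, e2.add i2⟩
      have : (a * a + s).natDegree = s.natDegree := by
        apply le_antisymm
        · exact (natDegree_add_le _ _).trans (by rw [h]; simp)
        · apply le_natDegree_of_ne_zero
          rw [coeff_add, ← h, coeff_natDegree, h, coeff_natDegree]; exact hne
      rw [this]; exact i1
    · rw [natDegree_add_eq_left_of_natDegree_lt h, leadingCoeff_add_of_degree_lt' (degree_lt_degree h)]
      exact ⟨e1, e2⟩

/-- maximal semireal fields are real closed -/
theorem rc_of_maximal {E Ω : Type*} [Field E] [Field Ω] [Algebra E Ω] [IsAlgClosed Ω] [IsSemireal E]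
    (hmax : ∀ α : Ω, α ∉ Set.range (algebraMap E Ω) → ¬ IsSemireal (IntermediateField.adjoin E {α})) : IsRealClosed E := by
  -- sums of squares in simple extensions
  have hlift : ∀ (m : E[X]) (n : ℕ), m.Monic → m.natDegree = n → 0 < n → ∀ α : Ω, aeval α m = 0 → 
      ∀ x : IntermediateField.adjoin E {α}, IsSumSq x → ∃ s : E[X], IsSumSq s ∧ s.natDegree ≤ 2 * (n - 1) ∧ aeval α s = (x : Ω) := by
    intro m n hm hn hn0 α hα x hx
    have hintg : IsIntegral E α := ⟨m, hm, hα⟩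
    induction hx with
    | zero => exact ⟨0, IsSumSq.zero, by simp, by simp⟩
    | @sq_add a s hs ih =>
      obtain ⟨s', h1, h2, h3⟩ := ih
      have ha : (a : Ω) ∈ (IntermediateField.adjoin E {α}).toSubalgebra := a.2
      rw [IntermediateField.adjoin_simple_toSubalgebra_of_isAlgebraic hintg.isAlgebraic, Algebra.adjoin_singleton_eq_range_aeval] at ha
      obtain ⟨b, hb⟩ := ha
      have hb' : aeval α (b %ₘ m) = (a : Ω) := by
        rw [← hb]; exact (aeval_modByMonic_eq_self_of_root hα)
      have hd : (b %ₘ m).natDegree ≤ n - 1 := by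
        have := natDegree_modByMonic_lt b hm (by rintro rfl; simp at hn; omega)
        omega
      refine ⟨(b %ₘ m) * (b %ₘ m) + s', IsSumSq.sq_add _ h1, ?_, ?_⟩
      · refine (natDegree_add_le _ _).trans (max_le (natDegree_mul_le.trans ?_) h2)
        omega
      · rw [map_add, map_mul, hb', h3]; simp
  have hnot : ∀ (m : E[X]) (n : ℕ), m.Monic → m.natDegree = n → 0 < n → ∀ α : Ω, aeval α m = 0 → α ∉ Set.range (algebraMap E Ω) →
      ∃ s : E[X], IsSumSq s ∧ s.natDegree ≤ 2 * (n - 1) ∧ aeval α (1 + s) = 0 := by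
    intro m n hm hn hn0 α hα hα'
    have := hmax α hα'
    rw [isSemireal_iff_not_isSumSq_neg_one, not_not] at this
    obtain ⟨s, h1, h2, h3⟩ := hlift m n hm hn hn0 α hα _ this
    refine ⟨s, h1, h2, ?_⟩
    rw [map_add, h3]; simp
  have hsq1 : ∀ a : E, ¬ IsSquare a → IsSumSq (-a) := by
    intro a ha
    obtain ⟨α, hα⟩ := IsAlgClosed.exists_pow_nat_eq (algebraMap E Ω a) (n := 2) (by norm_num)
    have hα' : α ∉ Set.range (algebraMap E Ω) := by
      rintro ⟨b, rfl⟩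
      apply ha
      refine ⟨b, (algebraMap E Ω).injective ?_⟩
      rw [map_mul, ← hα, sq]
    obtain ⟨s, h1, h2, h3⟩ := hnot (X ^ 2 - C a) 2 (monic_X_pow_sub_C a two_ne_zero) (natDegree_X_pow_sub_C)
      (by norm_num) α (by simp [hα]) hα'
    have s0 : IsSumSq (s.coeff 0) := by
      rw [coeff_zero_eq_eval_zero]; exact sumSq_map (evalRingHom 0) h1
    have s2 : IsSumSq (s.coeff 2) := by
      rcases eq_or_ne s.natDegree 2 with h | h
      · rcases sumSq_poly h1 with rfl | h'
        · simp
        · rw [← h]; exact h'.2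
      · rw [coeff_eq_zero_of_natDegree_lt (by omega)]; exact IsSumSq.zero
    have e := eq_quadratic_of_degree_le_two (p := s) (natDegree_le_iff_degree_le.1 (by omega))
    rw [e] at h3
    simp only [map_add, map_one, map_mul, aeval_C, aeval_X, map_pow, hα] at h3
    have c1 : s.coeff 1 = 0 := by
      by_contra hc
      apply hα'
      refine ⟨-(1 + s.coeff 0 + s.coeff 2 * a) / s.coeff 1, ?_⟩
      have hc' : algebraMap E Ω (s.coeff 1) ≠ 0 := (_root_.map_ne_zero _).2 hc
      rw [map_div₀, div_eq_iff hc']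
      simp only [map_neg, map_add, map_mul, map_one]
      linear_combination -h3
    have h4 : 1 + s.coeff 0 + s.coeff 2 * a = 0 := by
      apply (algebraMap E Ω).injective
      simp only [map_add, map_mul, map_one, map_zero]
      rw [c1, map_zero] at h3
      linear_combination h3
    have hne : s.coeff 2 ≠ 0 := by
      intro h0
      rw [h0, zero_mul, add_zero] at h4
      exact IsSemireal.one_add_ne_zero s0 h4
    have h5 : -a = (1 + s.coeff 0) * s.coeff 2 * ((s.coeff 2)⁻¹ * (s.coeff 2)⁻¹) := by
      field_simp
      linear_combination -h4
    rw [h5]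
    exact ((IsSumSq.one.add s0).mul s2).mul (IsSumSq.mul_self _)
  have hsq2 : ∀ a : E, IsSumSq a → IsSquare a := by
    intro a ha
    by_contra hn
    have := sumSq_cone a ha (hsq1 a hn)
    exact hn (by rw [this]; exact IsSquare.zero)
  have hodd : ∀ n : ℕ, ∀ f : E[X], f.natDegree = n → Odd n → ∃ x, f.IsRoot x := by
    intro n
    induction n using Nat.strong_induction_on with
    | _ n ih =>
    intro f hf hn
    have hn0 : 0 < n := hn.pos
    have hf0 : f ≠ 0 := by rintro rfl; simp at hf; omega
    by_cases hirr : Irreducible f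
    · obtain ⟨α, hα⟩ := IsAlgClosed.exists_aeval_eq_zero Ω f (by
        rw [Polynomial.degree_eq_natDegree hf0]; exact_mod_cast (by omega))
      by_cases hα' : α ∈ Set.range (algebraMap E Ω)
      · obtain ⟨b, rfl⟩ := hα'
        refine ⟨b, (algebraMap E Ω).injective ?_⟩
        rw [map_zero, ← hα, aeval_algebraMap_apply]; simp
      have hintg : IsIntegral E α := IsAlgebraic.isIntegral ⟨f, hf0, hα⟩
      have hm := minpoly.eq_of_irreducible hirr hα
      have hmd : (minpoly E α).natDegree = n := by
        rw [← hm, natDegree_mul_C (by simpa using hf0), hf]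
      obtain ⟨s, h1, h2, h3⟩ := hnot (minpoly E α) n (minpoly.monic hintg) hmd hn0 α (minpoly.aeval _ _) hα'
      obtain ⟨q, hq⟩ := minpoly.dvd E α h3
      have hne : 1 + s ≠ 0 := by
        intro h0
        have := congrArg (eval 0) h0
        rw [eval_add, eval_one, eval_zero] at this
        exact IsSemireal.one_add_ne_zero (sumSq_map (evalRingHom 0) h1) this
      have heven : Even (1 + s).natDegree := by
        rcases sumSq_poly (IsSumSq.one.add h1) with h | h
        · exact absurd h hne
        · exact h.1
      have hle : (1 + s).natDegree ≤ 2 * (n - 1) := (natDegree_add_le _ _).trans (by simpa using h2)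
      rw [hq] at hne
      rw [hq, natDegree_mul (left_ne_zero_of_mul hne) (right_ne_zero_of_mul hne), hmd] at heven hle
      have hqo : Odd q.natDegree := by
        by_contra hc
        rw [Nat.not_odd_iff_even] at hc
        exact (Nat.not_even_iff_odd.2 (hn.add_even hc)) heven
      obtain ⟨x, hx⟩ := ih q.natDegree (by omega) q rfl hqo
      exfalso
      have := congrArg (eval x) hq
      rw [eval_add, eval_one, eval_mul, hx.eq_zero, mul_zero] at this
      exact IsSemireal.one_add_ne_zero (sumSq_map (evalRingHom x) h1) this
    · have hnu : ¬ IsUnit f := fun h => by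
        have := natDegree_eq_zero_of_isUnit h; omega
      rw [irreducible_iff] at hirr
      push Not at hirr
      obtain ⟨p, q, rfl, hp, hq⟩ := hirr hnu
      have hp0 := left_ne_zero_of_mul hf0
      have hq0 := right_ne_zero_of_mul hf0
      have dp : 0 < p.natDegree := by
        by_contra hc; exact hp (isUnit_iff_degree_eq_zero.2 (by rw [degree_eq_natDegree hp0]; simp; omega))
      have dq : 0 < q.natDegree := by
        by_contra hc; exact hq (isUnit_iff_degree_eq_zero.2 (by rw [degree_eq_natDegree hq0]; simp; omega))
      rw [natDegree_mul hp0 hq0] at hf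
      by_cases hpo : Odd p.natDegree
      · obtain ⟨x, hx⟩ := ih _ (by omega) p rfl hpo
        exact ⟨x, by rw [IsRoot, eval_mul, hx.eq_zero, zero_mul]⟩
      · have hqo : Odd q.natDegree := by
          rw [Nat.not_odd_iff_even] at hpo
          by_contra hc
          rw [Nat.not_odd_iff_even] at hc
          rw [← hf] at hn
          exact (Nat.not_even_iff_odd.2 hn) (hpo.add hc)
        obtain ⟨x, hx⟩ := ih _ (by omega) q rfl hqo
        exact ⟨x, by rw [IsRoot, eval_mul, hx.eq_zero, mul_zero]⟩
  exact
    { isSquare_or_isSquare_neg := fun x => by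
        by_cases h : IsSquare x
        · exact Or.inl h
        · exact Or.inr (hsq2 _ (hsq1 x h))
      exists_isRoot_of_odd_natDegree := fun {f} hf => hodd _ f rfl hf }

theorem exists_realClosed (κ : Type u) [Field κ] [IsSemireal κ] :
    ∃ (L : Type u) (_ : Field L) (_ : κ →+* L), IsRealClosed L := by
  let Ω := AlgebraicClosure κ
  obtain ⟨E, -, hE⟩ := zorn_le_nonempty₀ {E : IntermediateField κ Ω | IsSemireal E} (by
    intro c hc hchain E0 hE0
    have : Nonempty c := ⟨⟨E0, hE0⟩⟩
    have hdir : Directed (· ≤ ·) (fun E : c => (E : IntermediateField κ Ω)) := hchain.directed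
    let M : IntermediateField κ Ω := ⨆ E : c, (E : IntermediateField κ Ω)
    have hM : ∀ x : Ω, x ∈ M → ∃ E ∈ c, x ∈ E := by
      intro x hx
      have : x ∈ (M : Set Ω) := hx
      rw [IntermediateField.coe_iSup_of_directed hdir] at this
      obtain ⟨E, hE⟩ := Set.mem_iUnion.1 this
      exact ⟨E, E.2, hE⟩
    have hlift : ∀ x : M, IsSumSq x → ∃ E ∈ c, ∃ y : E, IsSumSq y ∧ (y : Ω) = x := by
      intro x hx
      induction hx with
      | zero => exact ⟨E0, hE0, 0, IsSumSq.zero, by simp⟩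
      | @sq_add a s hs ih =>
        obtain ⟨E1, hE1, y, hy, hys⟩ := ih
        obtain ⟨E2, hE2, ha⟩ := hM a a.2
        rcases hchain.total hE1 hE2 with h | h
        · refine ⟨E2, hE2, ⟨a, ha⟩ * ⟨a, ha⟩ + IntermediateField.inclusion h y,
            IsSumSq.sq_add _ (sumSq_map (IntermediateField.inclusion h).toRingHom hy), ?_⟩
          simp [hys]
        · refine ⟨E1, hE1, ⟨a, h ha⟩ * ⟨a, h ha⟩ + y, IsSumSq.sq_add _ hy, ?_⟩
          simp [hys]
    refine ⟨M, ?_, fun E hE => le_iSup (fun E : c => (E : IntermediateField κ Ω)) ⟨E, hE⟩⟩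
    refine ⟨fun {s} hs h0 => ?_⟩
    obtain ⟨E, hEc, y, hy, hys⟩ := hlift s hs
    have : IsSemireal E := hc hEc
    apply IsSemireal.one_add_ne_zero hy
    apply Subtype.ext
    have := congrArg (fun z : M => (z : Ω)) h0
    simpa [hys] using this) ⊥ (by
      refine ⟨fun {s} hs h0 => ?_⟩
      have h1 := sumSq_map (IntermediateField.botEquiv κ Ω).toRingEquiv.toRingHom hs
      apply IsSemireal.one_add_ne_zero h1
      have := congrArg (IntermediateField.botEquiv κ Ω) h0
      rw [map_add, map_one, map_zero] at this
      exact this)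
  have hsr : IsSemireal E := hE.prop
  refine ⟨E, inferInstance, algebraMap κ E, ?_⟩
  refine rc_of_maximal (Ω := Ω) ?_
  intro α hα hs
  let F := (IntermediateField.adjoin E {α}).restrictScalars κ
  have hEF : E ≤ F := by
    intro x hx
    exact (IntermediateField.adjoin E {α}).algebraMap_mem ⟨x, hx⟩
  have h1 : F ≤ E := hE.le_of_ge (show IsSemireal F from hs) hEF
  apply hα
  exact ⟨⟨α, h1 (IntermediateField.mem_adjoin_simple_self E α)⟩, rfl⟩
end part6

section part7

theorem real_odd_root_aux (f : ℝ[X]) (hf : Odd f.natDegree) (hl : 0 < f.leadingCoeff) : ∃ x, f.IsRoot x := by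
  have hf0 : f ≠ 0 := by rintro rfl; simp at hf
  have hd : 0 < f.degree := natDegree_pos_iff_degree_pos.1 hf.pos
  have h1 := f.tendsto_atTop_of_leadingCoeff_nonneg hd hl.le
  have hg : (-(f.comp (-X))).natDegree = f.natDegree := by
    rw [natDegree_neg, natDegree_comp, natDegree_neg, natDegree_X, mul_one]
  have h2 := (-(f.comp (-X))).tendsto_atTop_of_leadingCoeff_nonneg
    (natDegree_pos_iff_degree_pos.1 (by rw [hg]; exact hf.pos)) (by
      rw [leadingCoeff_neg, leadingCoeff_comp (by simp), leadingCoeff_neg, leadingCoeff_X, hf.neg_one_pow]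
      simpa using hl.le)
  obtain ⟨b, hb⟩ := (h1.eventually (Filter.eventually_ge_atTop 0)).exists
  obtain ⟨a, ha⟩ := (h2.eventually (Filter.eventually_ge_atTop 0)).exists
  obtain ⟨x, hx⟩ := mem_range_of_exists_le_of_exists_ge f.continuous (c := 0) ⟨-a, by simpa using ha⟩ ⟨b, hb⟩
  exact ⟨x, hx⟩

instance real_isRealClosed : IsRealClosed ℝ := by
  apply IsRealClosed.of_linearOrderedField
  · intro x hx; exact ⟨√x, (Real.mul_self_sqrt hx).symm⟩
  · intro f hf
    have hf0 : f ≠ 0 := by rintro rfl; simp at hf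
    rcases lt_or_gt_of_ne (leadingCoeff_ne_zero.2 hf0) with h | h
    · obtain ⟨x, hx⟩ := real_odd_root_aux (-f) (by rwa [natDegree_neg]) (by rw [leadingCoeff_neg]; linarith)
      exact ⟨x, by simpa [IsRoot] using hx⟩
    · exact real_odd_root_aux f hf h

theorem rc_transfer {σ : Type*} [Finite σ] {L R : Type} [Field L] [IsRealClosed L] [Field R] [IsRealClosed R] [Algebra R L] (x : σ → L)
    (S : Finset (MvPolynomial σ R)) (hS : ∀ p ∈ S, MvPolynomial.aeval x p = 0) :
    ∃ y : σ → R, ∀ p ∈ S, MvPolynomial.eval y p = 0 := by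
  refine rc_chain (Set.finite_range x).toFinset R x ?_ S hS
  intro i
  have h : x i ∈ IntermediateField.adjoin R (((Set.finite_range x).toFinset : Finset L) : Set L) :=
    IntermediateField.subset_adjoin _ _ (by simp)
  exact isAlgebraic_algebraMap (⟨x i, h⟩ : IntermediateField.adjoin R (((Set.finite_range x).toFinset : Finset L) : Set L))

theorem sumSq_exists_fin {A : Type*} [CommRing A] {s : A} (hs : IsSumSq s) : ∃ (l : ℕ) (f : Fin l → A), s = ∑ i, f i ^ 2 := by
  induction hs with
  | zero => exact ⟨0, Fin.elim0, by simp⟩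
  | @sq_add a s hs ih =>
    obtain ⟨l, f, rfl⟩ := ih
    exact ⟨l + 1, Fin.cons a f, by rw [Fin.sum_univ_succ]; simp [sq]⟩

theorem sumSq_lift {A B : Type*} [CommRing A] [CommRing B] (φ : A →+* B) (hφ : Function.Surjective φ) {s : B} (hs : IsSumSq s) :
    ∃ t, IsSumSq t ∧ φ t = s := by
  induction hs with
  | zero => exact ⟨0, IsSumSq.zero, map_zero φ⟩
  | @sq_add a s hs ih =>
    obtain ⟨t, ht, rfl⟩ := ih
    obtain ⟨b, rfl⟩ := hφ a
    exact ⟨b * b + t, IsSumSq.sq_add _ ht, by simp⟩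

theorem real_nss_hard (n : ℕ) (I : Ideal (MvPolynomial (Fin n) ℝ)) (g : MvPolynomial (Fin n) ℝ)
    (hno : ∀ k : ℕ, ∀ s, IsSumSq s → g ^ (2 * k) + s ∉ I) :
    ∃ x : Fin n → ℝ, (∀ p ∈ I, MvPolynomial.eval x p = 0) ∧ MvPolynomial.eval x g ≠ 0 := by
  classical
  obtain ⟨κ, _, φ, hκ, hφ⟩ := exists_semireal_point (Ideal.Quotient.mk I g) (by
    intro k s hs h0
    obtain ⟨t, ht, rfl⟩ := sumSq_lift (Ideal.Quotient.mk I) Ideal.Quotient.mk_surjective hs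
    rw [← map_pow, ← map_add, Ideal.Quotient.eq_zero_iff_mem] at h0
    exact hno k t ht h0)
  obtain ⟨L, _, ψ, hL⟩ := exists_realClosed κ
  let χ : MvPolynomial (Fin n) ℝ →+* L := ψ.comp (φ.comp (Ideal.Quotient.mk I))
  let _ : Algebra ℝ L := (χ.comp MvPolynomial.C).toAlgebra
  let x : Fin n → L := fun i => χ (MvPolynomial.X i)
  have hx : ∀ p, MvPolynomial.aeval x p = χ p := by
    intro p
    have : (MvPolynomial.aeval x : MvPolynomial (Fin n) ℝ →ₐ[ℝ] L).toRingHom = χ := by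
      apply MvPolynomial.ringHom_ext
      · intro r; simp; rfl
      · intro i; simp [x]
    exact DFunLike.congr_fun this p
  have hI : ∀ p ∈ I, χ p = 0 := by
    intro p hp
    simp only [χ, RingHom.comp_apply]
    rw [Ideal.Quotient.eq_zero_iff_mem.2 hp, map_zero, map_zero]
  have hg : χ g ≠ 0 := by
    simp only [χ, RingHom.comp_apply]
    rwa [_root_.map_ne_zero]
  obtain ⟨S, hS⟩ := (inferInstance : IsNoetherianRing (MvPolynomial (Fin n) ℝ)).noetherian I
  let j : MvPolynomial (Fin n) ℝ →ₐ[ℝ] MvPolynomial (Option (Fin n)) ℝ := MvPolynomial.rename some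
  let z : Option (Fin n) → L := fun o => o.elim (χ g)⁻¹ x
  have hz : ∀ p, MvPolynomial.aeval z (j p) = χ p := by
    intro p
    rw [MvPolynomial.aeval_rename]; exact hx p
  obtain ⟨y, hy⟩ := rc_transfer (R := ℝ) z (insert (j g * MvPolynomial.X none - 1) (S.image j)) (by
    intro p hp
    rcases Finset.mem_insert.1 hp with rfl | hp
    · rw [map_sub, map_mul, hz, MvPolynomial.aeval_X, map_one]
      change χ g * (χ g)⁻¹ - 1 = 0
      rw [mul_inv_cancel₀ hg, sub_self]
    · obtain ⟨q, hq, rfl⟩ := Finset.mem_image.1 hp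
      rw [hz]
      exact hI q (hS ▸ Submodule.subset_span hq))
  have hyj : ∀ p, MvPolynomial.eval y (j p) = MvPolynomial.eval (fun i => y (some i)) p := by
    intro p; exact MvPolynomial.eval_rename _ _ _
  refine ⟨fun i => y (some i), ?_, ?_⟩
  · intro p hp
    have hle : I ≤ RingHom.ker (MvPolynomial.eval (fun i => y (some i))) := by
      rw [← hS]
      refine Submodule.span_le.2 ?_
      intro q hq
      have := hy (j q) (Finset.mem_insert_of_mem (Finset.mem_image_of_mem _ hq))
      rw [hyj] at this
      exact this
    exact hle hp
  · intro h0
    have := hy _ (Finset.mem_insert_self _ _)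
    rw [map_sub, map_mul, hyj, h0, zero_mul, map_one, zero_sub] at this
    norm_num at this

end part7


end RealAlgebra

/-- The Real Nullstellensatz: `𝓘(Z(I)) = ʳ√I`. -/
theorem real_nullstellensatz (n : ℕ) (I : Ideal (MvPolynomial (Fin n) ℝ)) :
    {g : MvPolynomial (Fin n) ℝ | ∀ x ∈ zeroSet n I, MvPolynomial.eval x g = 0} =
      realRadical n I := by
  ext g
  constructor
  · intro hg
    by_contra hno
    obtain ⟨x, h1, h2⟩ := real_nss_hard n I g (by
      intro k s hs hmem
      apply hno
      obtain ⟨l, f, hf⟩ := sumSq_exists_fin ((IsSumSq.mul_self g).mul hs)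
      refine ⟨k + 1, by omega, l, f, ?_⟩
      rw [← hf]
      have := I.mul_mem_left (g * g) hmem
      have e : g ^ (2 * (k + 1)) + g * g * s = g * g * (g ^ (2 * k) + s) := by ring
      rw [e]; exact this)
    exact h2 (hg x h1)
  · rintro ⟨k, hk, l, f, hmem⟩ x hx
    have h := hx _ hmem
    rw [map_add, map_pow, map_sum, pow_mul] at h
    have h1 : 0 ≤ (MvPolynomial.eval x g ^ 2) ^ k := by positivity
    have h2 : 0 ≤ ∑ i, MvPolynomial.eval x (f i ^ 2) :=
      Finset.sum_nonneg fun i _ => by rw [map_pow]; positivity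
    have h3 : (MvPolynomial.eval x g ^ 2) ^ k = 0 := by linarith
    exact pow_eq_zero_iff (two_ne_zero) |>.1 (pow_eq_zero_iff (by omega) |>.1 h3)
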